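/- Let K ∪ γ be in normal form with respect to the height function h, and suppose an isotopy of K ∪ γ exchanges the heights of the critical points at two adjacent critical levels t_{i−1} < t_i (no subarc connecting the two critical points lying entirely between the two levels), leaving all other critical levels unchanged. If the critical point at t_{i−1} is a minimum of K ∪ γ and the critical point at t_i is a maximum of K ∪ γ, then this move strictly reduces the width W(K ∪ γ). -/

import Mathlib

/-!
Common geometric definitions for "Levelling an unknotting tunnel"
(Goda–Scharlemann–Thompson).

The 3-sphere is modeled as the unit sphere in ℝ⁴, with height function the
fourth coordinate; level spheres are its level sets.  Knots, arcs, circles and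
disks are embedded images of the standard models.  Regular neighborhoods,
genus-two handlebodies, bridge/thin position, widths, upper/lower disks and
caps are given concrete topological definitions.
-/

open Filter Topology Set

noncomputable section

/-- The ambient 3–sphere `S³ ⊆ ℝ⁴`. -/
abbrev Amb : Type := Metric.sphere (0 : EuclideanSpace ℝ (Fin 4)) 1

/-- The height function on the 3–sphere: the fourth coordinate. -/
def height (p : Amb) : ℝ := (p : EuclideanSpace ℝ (Fin 4)) 3

/-- The level sphere `S(t) = h⁻¹(t)`. -/
def levelSphere (t : ℝ) : Set Amb := {p | height p = t}

/-- A subset is level if it lies in a single level sphere. -/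
def IsLevel (A : Set Amb) : Prop := ∃ t, A ⊆ levelSphere t

/-- The standard circle. -/
abbrev Circ : Type := Metric.sphere (0 : EuclideanSpace ℝ (Fin 2)) 1

/-- The standard 2–sphere. -/
abbrev Sphere2 : Type := Metric.sphere (0 : EuclideanSpace ℝ (Fin 3)) 1

/-- The standard closed 2–disk. -/
abbrev Disk2 : Type := Metric.closedBall (0 : EuclideanSpace ℝ (Fin 2)) 1

/-- The boundary circle of the standard 2–disk. -/
def diskBdry : Set Disk2 := {x | ‖(x : EuclideanSpace ℝ (Fin 2))‖ = 1}

/-- `K` is a knot: an embedded circle in `S³`. -/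
def IsKnot (K : Set Amb) : Prop :=
  ∃ f : C(Circ, Amb), Function.Injective f ∧ Set.range f = K

/-- An embedded arc with endpoints `a` and `b`. -/
def IsArcBetween (α : Set Amb) (a b : Amb) : Prop :=
  ∃ f : C(unitInterval, Amb), Function.Injective f ∧ Set.range f = α ∧ f 0 = a ∧ f 1 = b

/-- An embedded arc on which the height function is (strictly) monotonic. -/
def IsMonotoneArc (α : Set Amb) : Prop :=
  ∃ f : C(unitInterval, Amb), Function.Injective f ∧ Set.range f = α ∧
    ((StrictMono fun s => height (f s)) ∨ StrictAnti fun s => height (f s))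

/-- An embedded circle (simple closed curve). -/
def IsCircleSet (c : Set Amb) : Prop :=
  ∃ f : C(Circ, Amb), Function.Injective f ∧ Set.range f = c

/-- An embedded disk. -/
def IsEmbDisk (F : Set Amb) : Prop :=
  ∃ f : C(Disk2, Amb), Function.Injective f ∧ Set.range f = F

/-- An embedded 2–sphere. -/
def IsEmbSphere (S : Set Amb) : Prop :=
  ∃ f : C(Sphere2, Amb), Function.Injective f ∧ Set.range f = S

/-- An ambient isotopy of the 3–sphere: a continuous family of homeomorphisms
starting at the identity. -/
def IsIsotopy (F : unitInterval → Amb ≃ₜ Amb) : Prop :=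
  Continuous (fun q : unitInterval × Amb => F q.1 q.2) ∧ F 0 = Homeomorph.refl Amb

/-- Two subsets of the 3–sphere are ambiently isotopic. -/
def Isotopic (A B : Set Amb) : Prop :=
  ∃ F, IsIsotopy F ∧ (F 1) '' A = B

/-- `p` is a local maximum of the height function restricted to `A`. -/
def IsLocalMaxPt (A : Set Amb) (p : Amb) : Prop :=
  p ∈ A ∧ ∀ᶠ q in 𝓝[A] p, height q ≤ height p

/-- `p` is a local minimum of the height function restricted to `A`. -/
def IsLocalMinPt (A : Set Amb) (p : Amb) : Prop :=
  p ∈ A ∧ ∀ᶠ q in 𝓝[A] p, height p ≤ height q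

/-- The number of local maxima of the height function on `A`. -/
def numMaxima (A : Set Amb) : ℕ := {p | IsLocalMaxPt A p}.ncard

/-- Bridge position: every local minimum lies below every local maximum. -/
def InBridgePosition (A : Set Amb) : Prop :=
  ∀ p q, IsLocalMinPt A p → IsLocalMaxPt A q → height p < height q

/-- The bridge number of a knot: the minimal number of maxima over all bridge
positions of the knot. -/
def bridgeNumber (K : Set Amb) : ℕ :=
  sInf {n | ∃ K', Isotopic K K' ∧ InBridgePosition K' ∧ numMaxima K' = n}

/-- `K` is in minimal bridge position. -/
def MinimalBridgePosition (K : Set Amb) : Prop :=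
  InBridgePosition K ∧ numMaxima K = bridgeNumber K

/-- The critical heights of `A` (heights of local extrema of the height
function on `A`, together with the heights of the vertex set `V`). -/
def criticalHeights (A V : Set Amb) : Set ℝ :=
  height '' ({p | IsLocalMaxPt A p ∨ IsLocalMinPt A p} ∪ V)

open scoped Classical in
/-- Auxiliary width: `T` is the (finite) set of critical heights and `Vh` the
set of heights receiving weight one (vertex heights); between consecutive
critical heights the points of `A` at the intermediate level are counted,
with weight `2` except on intervals whose top endpoint lies in `Vh`. -/
noncomputable def widthAux (A : Set Amb) (T Vh : Set ℝ) : ℕ :=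
  if hfin : T.Finite then
    (let L := hfin.toFinset.sort (· ≤ ·)
     ((L.zip L.tail).map fun p =>
       (if p.2 ∈ Vh then 1 else 2) * (A ∩ levelSphere ((p.1 + p.2) / 2)).ncard).sum)
  else 0

/-- The Gabai width of a knot. -/
noncomputable def knotWidth (K : Set Amb) : ℕ :=
  widthAux K (criticalHeights K ∅) Set.univ

/-- Thin position of a knot: no isotopic repositioning has smaller width. -/
def ThinPosition (K : Set Amb) : Prop :=
  ∀ K', Isotopic K K' → knotWidth K ≤ knotWidth K'

/-- A planar figure-eight graph in ℝ³. -/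
def figureEight : Set (EuclideanSpace ℝ (Fin 3)) :=
  {p | p 2 = 0 ∧ ((p 0 - 1) ^ 2 + (p 1) ^ 2 = 1 ∨ (p 0 + 1) ^ 2 + (p 1) ^ 2 = 1)}

/-- A standard genus-two handlebody: a thin closed neighborhood of a planar
figure eight in ℝ³. -/
def stdGenus2Handlebody : Set (EuclideanSpace ℝ (Fin 3)) :=
  {p | ∃ q ∈ figureEight, dist p q ≤ 4⁻¹}

/-- A subset of the 3–sphere is a genus-two handlebody if it is homeomorphic to
the standard model. -/
def IsGenus2Handlebody (W : Set Amb) : Prop :=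
  Nonempty (W ≃ₜ stdGenus2Handlebody)

/-- `N` is a regular neighborhood of `X`: a compact set containing `X` in its
interior and admitting a retraction onto `X`. -/
def IsRegularNbhd (N X : Set Amb) : Prop :=
  IsCompact N ∧ X ⊆ interior N ∧
  ∃ r : C(N, Amb), Set.range r = X ∧ ∀ p : N, (p : Amb) ∈ X → r p = p

/-- `γ` is an unknotting tunnel for `K`: an arc meeting `K` exactly in its two
endpoints, such that both a regular neighborhood of `K ∪ γ` and the closure of
its complement are genus-two handlebodies. -/
def IsUnknottingTunnel (K γ : Set Amb) : Prop :=
  (∃ a b, a ≠ b ∧ IsArcBetween γ a b ∧ K ∩ γ = {a, b}) ∧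
  ∃ N, IsRegularNbhd N (K ∪ γ) ∧ IsGenus2Handlebody N ∧ IsGenus2Handlebody (closure Nᶜ)

/-- `K` has tunnel number one. -/
def TunnelNumberOne (K : Set Amb) : Prop :=
  IsKnot K ∧ ∃ γ, IsUnknottingTunnel K γ

/-- `(γa, γc)` is a tunnel for `K`, either in arc form (`γc = ∅`) or in
eyeglass form (arc `γa` together with circle `γc`). -/
def IsTunnelConfig (K γa γc : Set Amb) : Prop :=
  IsKnot K ∧
  ((γc = ∅ ∧ ∃ a b, a ≠ b ∧ IsArcBetween γa a b ∧ K ∩ γa = {a, b}) ∨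
    (∃ v w, v ≠ w ∧ IsArcBetween γa v w ∧ IsCircleSet γc ∧
      γa ∩ γc = {w} ∧ K ∩ (γa ∪ γc) = {v})) ∧
  ∃ N, IsRegularNbhd N (K ∪ γa ∪ γc) ∧ IsGenus2Handlebody N ∧
    IsGenus2Handlebody (closure Nᶜ)

/-- The (trivalent) vertices of the graph `K ∪ γ`. -/
def graphVertices (K γa γc : Set Amb) : Set Amb :=
  (K ∩ (γa ∪ γc)) ∪ (γa ∩ γc)

/-- The width of a graph `A` with vertex set `V`. -/
noncomputable def graphWidth (A V : Set Amb) : ℕ :=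
  widthAux A (criticalHeights A V) (height '' V)

/-- The width `W(K ∪ γ)` of a tunnel configuration. -/
noncomputable def configWidth (K γa γc : Set Amb) : ℕ :=
  graphWidth (K ∪ γa ∪ γc) (graphVertices K γa γc)

/-- `γ'` is obtained from `γ` by slides and isotopies rel `K`: an ambient
isotopy preserving the bridge presentation of `K` throughout, returning `K` to
itself, and carrying a regular neighborhood of `K ∪ γ` to a regular
neighborhood of `K ∪ γ'`. -/
def SlideIsotopic (K γ γ' : Set Amb) : Prop :=
  ∃ F : unitInterval → Amb ≃ₜ Amb, IsIsotopy F ∧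
    (∀ t, InBridgePosition ((F t) '' K) ∧ numMaxima ((F t) '' K) = numMaxima K) ∧
    (F 1) '' K = K ∧
    ∃ N N', IsRegularNbhd N (K ∪ γ) ∧ IsRegularNbhd N' (K ∪ γ') ∧ (F 1) '' N = N'

/-- The critical height `t` of `A` is (the height of) a maximum: the count of
points of `A` on nearby level spheres drops when crossing `t` upwards.  This
includes regular maxima and λ–vertices. -/
def IsMaxHeight (A : Set Amb) (t : ℝ) : Prop :=
  ∀ᶠ ε in 𝓝[>] (0 : ℝ),
    (A ∩ levelSphere (t + ε)).ncard < (A ∩ levelSphere (t - ε)).ncard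

/-- The critical height `t` of `A` is (the height of) a minimum (a regular
minimum or a Y–vertex). -/
def IsMinHeight (A : Set Amb) (t : ℝ) : Prop :=
  ∀ᶠ ε in 𝓝[>] (0 : ℝ),
    (A ∩ levelSphere (t - ε)).ncard < (A ∩ levelSphere (t + ε)).ncard

/-- Normal (Morse) form for a graph `A` with vertex set `V`: finitely many
critical heights, all at distinct levels, with level counts locally constant
away from critical heights, each critical height a maximum or a minimum, and
counts changing by one across a vertex and by two across a regular extremum. -/
structure NormalFormPos (A V : Set Amb) : Prop where
  vertSub : V ⊆ A
  finCrit : (criticalHeights A V).Finite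
  finLevel : ∀ t, t ∉ criticalHeights A V → (A ∩ levelSphere t).Finite
  distinctHeights : Set.InjOn height ({p | IsLocalMaxPt A p ∨ IsLocalMinPt A p} ∪ V)
  locConst : ∀ s s' : ℝ, s ≤ s' → (∀ u ∈ criticalHeights A V, u ∉ Set.Icc s s') →
    (A ∩ levelSphere s).ncard = (A ∩ levelSphere s').ncard
  maxOrMin : ∀ t ∈ criticalHeights A V, IsMaxHeight A t ∨ IsMinHeight A t
  vertexStep : ∀ t ∈ criticalHeights A V, t ∈ height '' V →
    ∀ᶠ ε in 𝓝[>] (0 : ℝ),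
      (A ∩ levelSphere (t + ε)).ncard + 1 = (A ∩ levelSphere (t - ε)).ncard ∨
      (A ∩ levelSphere (t - ε)).ncard + 1 = (A ∩ levelSphere (t + ε)).ncard
  regStep : ∀ t ∈ criticalHeights A V, t ∉ height '' V →
    ∀ᶠ ε in 𝓝[>] (0 : ℝ),
      (A ∩ levelSphere (t + ε)).ncard + 2 = (A ∩ levelSphere (t - ε)).ncard ∨
      (A ∩ levelSphere (t - ε)).ncard + 2 = (A ∩ levelSphere (t + ε)).ncard

/-- Thin position of the pair `(K, γ)` rel `K`: the configuration is in normal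
form and its width cannot be decreased by slides and isotopies of the tunnel
that leave the bridge presentation of `K` unchanged. -/
def ThinPositionRelK (K γa γc : Set Amb) : Prop :=
  IsTunnelConfig K γa γc ∧
  NormalFormPos (K ∪ γa ∪ γc) (graphVertices K γa γc) ∧
  ∀ γa' γc', IsTunnelConfig K γa' γc' →
    SlideIsotopic K (γa ∪ γc) (γa' ∪ γc') →
    NormalFormPos (K ∪ γa' ∪ γc') (graphVertices K γa' γc') →
    configWidth K γa γc ≤ configWidth K γa' γc'

/-- Bridge position for a graph: every minimum occurs below every maximum. -/
def GraphBridgePosition (A V : Set Amb) : Prop :=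
  ∀ t₁ t₂, t₁ ∈ criticalHeights A V → t₂ ∈ criticalHeights A V →
    IsMinHeight A t₁ → IsMaxHeight A t₂ → t₁ < t₂

/-- A good upper disk for the level sphere at height `z`, with respect to the
graph `G = K ∪ γ`: an embedded disk whose boundary is the union of an arc `α`
in the level sphere and an arc `β` on the graph, meeting the graph precisely
in `β`, with a collar of its boundary lying above the level sphere. -/
def GoodUpperDiskAt (G : Set Amb) (z : ℝ) (F α β : Set Amb) (a b : Amb) : Prop :=
  ∃ f : C(Disk2, Amb), Function.Injective f ∧ Set.range f = F ∧
    f '' diskBdry = α ∪ β ∧ a ≠ b ∧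
    IsArcBetween α a b ∧ IsArcBetween β a b ∧ α ∩ β = {a, b} ∧
    α ⊆ levelSphere z ∧ β ⊆ G ∧ F ∩ G = β ∧
    ∀ p ∈ α ∪ β, ∀ᶠ q in 𝓝[F] p, z ≤ height q

/-- A bad upper disk: the arc in the level sphere is a loop, based at a point
of the graph. -/
def BadUpperDiskAt (G : Set Amb) (z : ℝ) (F α : Set Amb) (a : Amb) : Prop :=
  ∃ f : C(Disk2, Amb), Function.Injective f ∧ Set.range f = F ∧
    f '' diskBdry = α ∧ IsCircleSet α ∧ a ∈ α ∧
    α ⊆ levelSphere z ∧ a ∈ G ∧ F ∩ G = {a} ∧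
    ∀ p ∈ α, ∀ᶠ q in 𝓝[F] p, z ≤ height q

/-- A good lower disk. -/
def GoodLowerDiskAt (G : Set Amb) (z : ℝ) (F α β : Set Amb) (a b : Amb) : Prop :=
  ∃ f : C(Disk2, Amb), Function.Injective f ∧ Set.range f = F ∧
    f '' diskBdry = α ∪ β ∧ a ≠ b ∧
    IsArcBetween α a b ∧ IsArcBetween β a b ∧ α ∩ β = {a, b} ∧
    α ⊆ levelSphere z ∧ β ⊆ G ∧ F ∩ G = β ∧
    ∀ p ∈ α ∪ β, ∀ᶠ q in 𝓝[F] p, height q ≤ z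

/-- A bad lower disk. -/
def BadLowerDiskAt (G : Set Amb) (z : ℝ) (F α : Set Amb) (a : Amb) : Prop :=
  ∃ f : C(Disk2, Amb), Function.Injective f ∧ Set.range f = F ∧
    f '' diskBdry = α ∧ IsCircleSet α ∧ a ∈ α ∧
    α ⊆ levelSphere z ∧ a ∈ G ∧ F ∩ G = {a} ∧
    ∀ p ∈ α, ∀ᶠ q in 𝓝[F] p, height q ≤ z

/-- An upper disk (good or bad) for level `z`, with boundary arc/loop `α` in
the level sphere. -/
def UpperDiskAt (G : Set Amb) (z : ℝ) (F α : Set Amb) : Prop :=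
  (∃ β a b, GoodUpperDiskAt G z F α β a b) ∨ ∃ a, BadUpperDiskAt G z F α a

/-- A lower disk (good or bad) for level `z`. -/
def LowerDiskAt (G : Set Amb) (z : ℝ) (F α : Set Amb) : Prop :=
  (∃ β a b, GoodLowerDiskAt G z F α β a b) ∨ ∃ a, BadLowerDiskAt G z F α a

def IsUpperDisk (G : Set Amb) (z : ℝ) (F : Set Amb) : Prop := ∃ α, UpperDiskAt G z F α

def IsLowerDisk (G : Set Amb) (z : ℝ) (F : Set Amb) : Prop := ∃ α, LowerDiskAt G z F α

/-- An upper cap for `K ∪ γ` at the level sphere of height `z`: an embedded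
disk disjoint from the graph, meeting the level sphere exactly in its boundary,
which is essential in the complement of the graph in the level sphere (both
complementary components meet the graph), with interior above the sphere. -/
def IsUpperCap (G : Set Amb) (z : ℝ) (Cp : Set Amb) : Prop :=
  ∃ f : C(Disk2, Amb), Function.Injective f ∧ Set.range f = Cp ∧
    Cp ∩ G = ∅ ∧ Cp ∩ levelSphere z = f '' diskBdry ∧
    (∀ p ∈ Cp \ f '' diskBdry, z < height p) ∧
    ∀ q ∈ levelSphere z \ f '' diskBdry,
      (connectedComponentIn (levelSphere z \ f '' diskBdry) q ∩ G).Nonempty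

/-- A lower cap. -/
def IsLowerCap (G : Set Amb) (z : ℝ) (Cp : Set Amb) : Prop :=
  ∃ f : C(Disk2, Amb), Function.Injective f ∧ Set.range f = Cp ∧
    Cp ∩ G = ∅ ∧ Cp ∩ levelSphere z = f '' diskBdry ∧
    (∀ p ∈ Cp \ f '' diskBdry, height p < z) ∧
    ∀ q ∈ levelSphere z \ f '' diskBdry,
      (connectedComponentIn (levelSphere z \ f '' diskBdry) q ∩ G).Nonempty

/-- `m` is a meridian of the edge `e` of the graph `G`, on the boundary of the
regular neighborhood `N` of `G`: the boundary of a meridian disk in `N`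
meeting `G` in a single point of `e`. -/
def IsMeridianOf (G N e m : Set Amb) : Prop :=
  ∃ (f : C(Disk2, Amb)) (p : Amb), Function.Injective f ∧
    Set.range f ⊆ N ∧ f '' diskBdry = m ∧ m ⊆ frontier N ∧
    Set.range f ∩ G = {p} ∧ p ∈ e

end

/-- A sum over consecutive pairs of a list splits at any entry of the list. -/
lemma sum_zip_tail_append {α : Type*} (f : α × α → ℕ) (l : List α) (a : α) (r : List α) :
    (((l ++ a :: r).zip (l ++ a :: r).tail).map f).sum =
      (((l ++ [a]).zip (l ++ [a]).tail).map f).sum + (((a :: r).zip r).map f).sum := by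
  induction l with
  | nil => simp
  | cons x l ih =>
    cases l with
    | nil => simp
    | cons y l =>
      simp only [List.cons_append, List.tail_cons, List.zip_cons_cons, List.map_cons,
        List.sum_cons] at ih ⊢
      omega

/-- Consecutive entries of a strictly increasing list are strictly increasing entries of it. -/
lemma mem_zip_tail_of_pairwise {α : Type*} [LT α] {l : List α} (hl : l.Pairwise (· < ·))
    {p : α × α} (hp : p ∈ l.zip l.tail) : p.1 ∈ l ∧ p.2 ∈ l ∧ p.1 < p.2 := by
  induction l with
  | nil => simp at hp
  | cons x l ih =>
    cases l with
    | nil => simp at hp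
    | cons y l =>
      simp only [List.tail_cons, List.zip_cons_cons, List.mem_cons] at hp
      rcases hp with rfl | hp
      · exact ⟨by simp, by simp, List.rel_of_pairwise_cons hl (by simp)⟩
      · obtain ⟨h₁, h₂, h₃⟩ := ih hl.of_cons (by simpa using hp)
        exact ⟨List.mem_cons_of_mem _ h₁, List.mem_cons_of_mem _ h₂, h₃⟩

lemma neg_one_le_height (p : Amb) : -1 ≤ height p := by
  have h := PiLp.norm_apply_le (p : EuclideanSpace ℝ (Fin 4)) 3
  rw [norm_eq_of_mem_sphere p] at h
  exact (abs_le.mp h).1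

/-- Below all critical heights a graph in normal form has no points. -/
lemma NormalFormPos.ncard_level_eq_zero {A V : Set Amb} (h : NormalFormPos A V) {s : ℝ}
    (hs : ∀ u ∈ criticalHeights A V, s < u) : (A ∩ levelSphere s).ncard = 0 := by
  rw [← h.locConst (min s (-2)) s (min_le_left _ _)
    fun u hu hmem => absurd hmem.2 (not_le.mpr (hs u hu))]
  have hempty : A ∩ levelSphere (min s (-2)) = ∅ := by
    ext p
    simp only [levelSphere, Set.mem_inter_iff, Set.mem_ofPred_eq, Set.mem_empty_iff_false,
      iff_false, not_and]
    intro _ hp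
    linarith [neg_one_le_height p, min_le_right s (-2)]
  rw [hempty, Set.ncard_empty]

/-- If `t` is the only critical height in `[s, s']`, the counts just below and just above `t`
are those at `s` and `s'`. -/
lemma NormalFormPos.eventually_ncard_eq {A V : Set Amb} (h : NormalFormPos A V) {s t s' : ℝ}
    (hs : s < t) (hs' : t < s')
    (hc : ∀ u ∈ criticalHeights A V, u ∈ Set.Icc s s' → u = t) :
    ∀ᶠ ε in 𝓝[>] (0 : ℝ),
      (A ∩ levelSphere (t - ε)).ncard = (A ∩ levelSphere s).ncard ∧
      (A ∩ levelSphere (t + ε)).ncard = (A ∩ levelSphere s').ncard := by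
  filter_upwards [Ioo_mem_nhdsGT (sub_pos.mpr hs), Ioo_mem_nhdsGT (sub_pos.mpr hs')]
    with ε h₁ h₂
  obtain ⟨h0, h₁⟩ := h₁
  have h₂ := h₂.2
  constructor
  · refine (h.locConst s (t - ε) (by linarith) fun u hu hm => ?_).symm
    have := hc u hu ⟨hm.1, by linarith [hm.2]⟩
    linarith [hm.2]
  · refine h.locConst (t + ε) s' (by linarith) fun u hu hm => ?_
    have := hc u hu ⟨by linarith [hm.1], hm.2⟩
    linarith [hm.1]

open scoped Classical in
lemma NormalFormPos.ncard_eq_of_isMinHeight {A V : Set Amb} (h : NormalFormPos A V)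
    {s t s' : ℝ} (ht : t ∈ criticalHeights A V) (hs : s < t) (hs' : t < s')
    (hc : ∀ u ∈ criticalHeights A V, u ∈ Set.Icc s s' → u = t) (hmin : IsMinHeight A t) :
    (A ∩ levelSphere s).ncard + (if t ∈ height '' V then 1 else 2) =
      (A ∩ levelSphere s').ncard := by
  have hev := (h.eventually_ncard_eq hs hs' hc).and hmin
  split_ifs with hv
  · obtain ⟨ε, ⟨⟨h₁, h₂⟩, h₃⟩, h₄⟩ := (hev.and (h.vertexStep t ht hv)).exists
    omega
  · obtain ⟨ε, ⟨⟨h₁, h₂⟩, h₃⟩, h₄⟩ := (hev.and (h.regStep t ht hv)).exists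
    omega

open scoped Classical in
lemma NormalFormPos.ncard_eq_of_isMaxHeight {A V : Set Amb} (h : NormalFormPos A V)
    {s t s' : ℝ} (ht : t ∈ criticalHeights A V) (hs : s < t) (hs' : t < s')
    (hc : ∀ u ∈ criticalHeights A V, u ∈ Set.Icc s s' → u = t) (hmax : IsMaxHeight A t) :
    (A ∩ levelSphere s').ncard + (if t ∈ height '' V then 1 else 2) =
      (A ∩ levelSphere s).ncard := by
  have hev := (h.eventually_ncard_eq hs hs' hc).and hmax
  split_ifs with hv
  · obtain ⟨ε, ⟨⟨h₁, h₂⟩, h₃⟩, h₄⟩ := (hev.and (h.vertexStep t ht hv)).exists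
    omega
  · obtain ⟨ε, ⟨⟨h₁, h₂⟩, h₃⟩, h₄⟩ := (hev.and (h.regStep t ht hv)).exists
    omega

/-- The level counts near a common critical height determine whether it is the height of a
vertex. -/
lemma NormalFormPos.mem_vertexHeights_iff {A V A' V' : Set Amb} (h : NormalFormPos A V)
    (h' : NormalFormPos A' V') {t : ℝ} (ht : t ∈ criticalHeights A V)
    (ht' : t ∈ criticalHeights A' V')
    (hN : ∀ᶠ s in 𝓝 t, (A' ∩ levelSphere s).ncard = (A ∩ levelSphere s).ncard) :
    t ∈ height '' V' ↔ t ∈ height '' V := by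
  have hadd : Tendsto (fun ε : ℝ => t + ε) (𝓝[>] 0) (𝓝 t) := by
    have hcont : Continuous fun ε : ℝ => t + ε := by fun_prop
    exact (hcont.tendsto' 0 t (add_zero t)).mono_left nhdsWithin_le_nhds
  have hsub : Tendsto (fun ε : ℝ => t - ε) (𝓝[>] 0) (𝓝 t) := by
    have hcont : Continuous fun ε : ℝ => t - ε := by fun_prop
    exact (hcont.tendsto' 0 t (sub_zero t)).mono_left nhdsWithin_le_nhds
  have hev := (hadd.eventually hN).and (hsub.eventually hN)
  by_cases hv : t ∈ height '' V <;> by_cases hv' : t ∈ height '' V' <;>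
    simp only [hv, hv', iff_true, iff_false, not_true_eq_false]
  · obtain ⟨ε, ⟨⟨h₁, h₂⟩, h₃⟩, h₄⟩ :=
      ((hev.and (h.vertexStep t ht hv)).and (h'.regStep t ht' hv')).exists
    omega
  · obtain ⟨ε, ⟨⟨h₁, h₂⟩, h₃⟩, h₄⟩ :=
      ((hev.and (h.regStep t ht hv)).and (h'.vertexStep t ht' hv')).exists
    omega

/-- Two entries `t₁ < t₂` of a strictly increasing list with no entry strictly between them,
`t₁` not being the least entry, are consecutive and preceded by a further entry. -/
lemma exists_eq_append_of_adjacent {L : List ℝ} (hL : L.Pairwise (· < ·)) {t₁ t₂ : ℝ}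
    (h₁ : t₁ ∈ L) (h₂ : t₂ ∈ L) (hlt : t₁ < t₂) (hadj : ∀ u ∈ L, ¬(t₁ < u ∧ u < t₂))
    (hlow : ∃ u ∈ L, u < t₁) : ∃ l a r, L = l ++ a :: t₁ :: t₂ :: r := by
  obtain ⟨A, B, rfl⟩ := List.append_of_mem h₁
  obtain ⟨-, hB, hAB⟩ := List.pairwise_append.mp hL
  have hB' := List.pairwise_cons.mp hB
  obtain ⟨u, hu, hut⟩ := hlow
  have hAne : A ≠ [] := by
    rintro rfl
    rcases List.mem_cons.mp hu with rfl | hu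
    · exact lt_irrefl _ hut
    · exact lt_asymm hut (hB'.1 u hu)
  have h₂B : t₂ ∈ B := by
    rcases List.mem_append.mp h₂ with h | h
    · exact absurd (hAB t₂ h t₁ (by simp)) (lt_asymm hlt)
    · exact (List.mem_cons.mp h).resolve_left hlt.ne'
  obtain ⟨l, a, rfl⟩ := (List.eq_nil_or_concat A).resolve_left hAne
  cases B with
  | nil => simp at h₂B
  | cons c r =>
    have hc : c = t₂ := by
      rcases List.mem_cons.mp h₂B with h | h
      · exact h.symm
      · exact absurd ⟨hB'.1 c (by simp), List.rel_of_pairwise_cons hB'.2 h⟩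
          (hadj c (by simp))
    exact ⟨l, a, r, by simp [hc]⟩

/-- Section 3, Claim 2.  Suppose `K ∪ γ` (the graph `G` with
vertex set `V`) is in normal form, and an isotopy exchanges the heights of the
critical points at the adjacent critical levels `t₁ < t₂`, leaving all other
critical levels (and the level counts away from the exchanged levels)
unchanged, producing the normal form graph `G'` with vertex set `V'`.  If the
critical point at `t₁` is a minimum and the critical point at `t₂` is a
maximum, the move strictly reduces the width `W(K ∪ γ)`. -/
theorem exchange_min_max_reduces_width
    (G V G' V' : Set Amb) (t₁ t₂ : ℝ)
    (hNF : NormalFormPos G V) (hNF' : NormalFormPos G' V')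
    (hiso : ∃ F, IsIsotopy F ∧ (F 1) '' G = G' ∧ (F 1) '' V = V')
    (ht₁ : t₁ ∈ criticalHeights G V) (ht₂ : t₂ ∈ criticalHeights G V)
    (hlt : t₁ < t₂)
    (hadj : ∀ u ∈ criticalHeights G V, ¬(t₁ < u ∧ u < t₂))
    (hT : criticalHeights G' V' = criticalHeights G V)
    (hout : ∀ s : ℝ, s ∉ Set.Icc t₁ t₂ →
      (G' ∩ levelSphere s).ncard = (G ∩ levelSphere s).ncard)
    (hswapv₁ : t₁ ∈ height '' V' ↔ t₂ ∈ height '' V)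
    (hswapv₂ : t₂ ∈ height '' V' ↔ t₁ ∈ height '' V)
    (hswapm₁ : IsMaxHeight G' t₁ ↔ IsMaxHeight G t₂)
    (hswapm₂ : IsMaxHeight G' t₂ ↔ IsMaxHeight G t₁)
    (hswapn₁ : IsMinHeight G' t₁ ↔ IsMinHeight G t₂)
    (hswapn₂ : IsMinHeight G' t₂ ↔ IsMinHeight G t₁)
    (hmin : IsMinHeight G t₁) (hmax : IsMaxHeight G t₂) :
    graphWidth G' V' < graphWidth G V := by
  classical
  have hT₁' : t₁ ∈ criticalHeights G' V' := hT ▸ ht₁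
  have hlow : ∃ u ∈ criticalHeights G V, u < t₁ := by
    by_contra! hno
    have hs := hNF'.ncard_eq_of_isMaxHeight (s := t₁ - 1) (s' := (t₁ + t₂) / 2) hT₁'
      (by linarith) (by linarith) (fun u hu hm => by
        rw [hT] at hu
        by_contra hne
        exact hadj u hu ⟨lt_of_le_of_ne (hno u hu) (Ne.symm hne), by linarith [hm.2]⟩)
      (hswapm₁.mpr hmax)
    have hzero := hNF'.ncard_level_eq_zero (s := t₁ - 1) fun u hu => by
      rw [hT] at hu
      linarith [hno u hu]
    split_ifs at hs <;> omega
  have hvert : ∀ u ∈ criticalHeights G V, u ∉ Set.Icc t₁ t₂ →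
      (u ∈ height '' V' ↔ u ∈ height '' V) := fun u hu hout' =>
    hNF.mem_vertexHeights_iff hNF' hu (hT ▸ hu)
      (Filter.mem_of_superset (isClosed_Icc.isOpen_compl.mem_nhds hout') hout)
  have hfin := hNF.finCrit
  unfold graphWidth widthAux
  rw [hT, dif_pos hfin, dif_pos hfin]
  have hpw : (hfin.toFinset.sort (· ≤ ·)).Pairwise (· < ·) := hfin.toFinset.sortedLT_sort.pairwise
  have hmem : ∀ u, u ∈ hfin.toFinset.sort (· ≤ ·) ↔ u ∈ criticalHeights G V := by simp
  obtain ⟨l, a, r, hL⟩ := exists_eq_append_of_adjacent hpw ((hmem _).mpr ht₁)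
    ((hmem _).mpr ht₂) hlt (fun u hu => hadj u ((hmem u).mp hu))
    (by simpa only [hmem] using hlow)
  simp only [hL] at hpw hmem ⊢
  have hpw' : ((l ++ [a]) ++ t₁ :: t₂ :: r).Pairwise (· < ·) := by simpa using hpw
  obtain ⟨hlpw, htpw, hcross⟩ := List.pairwise_append.mp hpw'
  have hat : a < t₁ := hcross a (by simp) t₁ (by simp)
  have hgap : ∀ u ∈ criticalHeights G V, u ∈ Set.Icc ((a + t₁) / 2) ((t₁ + t₂) / 2) →
      u = t₁ := by
    intro u hu hm
    by_contra hne
    rcases lt_or_gt_of_ne hne with hlt' | hgt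
    · have hul : u ∈ (l ++ [a]) ++ t₁ :: t₂ :: r := by simpa using (hmem u).mpr hu
      rcases List.mem_append.mp hul with h | h
      · have hua : u ≤ a := by
          rcases List.mem_append.mp h with h | h
          · exact ((List.pairwise_append.mp hlpw).2.2 u h a (by simp)).le
          · simp_all
        linarith [hm.1]
      · rcases List.mem_cons.mp h with h | h
        · exact hne h
        · exact lt_asymm hlt' (List.rel_of_pairwise_cons htpw h)
    · exact hadj u hu ⟨hgt, by linarith [hm.2]⟩
  have hup := hNF.ncard_eq_of_isMinHeight ht₁ (s := (a + t₁) / 2) (s' := (t₁ + t₂) / 2)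
    (by linarith) (by linarith) hgap hmin
  have hdown := hNF'.ncard_eq_of_isMaxHeight hT₁' (s := (a + t₁) / 2) (s' := (t₁ + t₂) / 2)
    (by linarith) (by linarith) (hT ▸ hgap) (hswapm₁.mpr hmax)
  have hsame := hout ((a + t₁) / 2) (fun h => by linarith [h.1])
  simp only [sum_zip_tail_append _ l a (t₁ :: t₂ :: r), List.zip_cons_cons, List.map_cons, List.sum_cons]
  have hbelow : ∀ p ∈ (l ++ [a]).zip (l ++ [a]).tail,
      (if p.2 ∈ height '' V' then 1 else 2) *
        (G' ∩ levelSphere ((p.1 + p.2) / 2)).ncard =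
      (if p.2 ∈ height '' V then 1 else 2) *
        (G ∩ levelSphere ((p.1 + p.2) / 2)).ncard := by
    intro p hp
    obtain ⟨h₁, h₂, h₃⟩ := mem_zip_tail_of_pairwise hlpw hp
    have hpt := hcross p.2 h₂ t₁ (by simp)
    have hpc : p.2 ∈ criticalHeights G V := (hmem _).mp (by
      have : p.2 ∈ (l ++ [a]) ++ t₁ :: t₂ :: r := List.mem_append_left _ h₂
      simpa using this)
    rw [hout _ (fun h => by linarith [h.1])]
    simp only [hvert p.2 hpc (fun h => by linarith [h.1])]
  have habove : ∀ p ∈ (t₂ :: r).zip r,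
      (if p.2 ∈ height '' V' then 1 else 2) *
        (G' ∩ levelSphere ((p.1 + p.2) / 2)).ncard =
      (if p.2 ∈ height '' V then 1 else 2) *
        (G ∩ levelSphere ((p.1 + p.2) / 2)).ncard := by
    intro p hp
    obtain ⟨h₁, h₂, h₃⟩ := mem_zip_tail_of_pairwise htpw.of_cons hp
    have hpt : t₂ ≤ p.1 := by
      rcases List.mem_cons.mp h₁ with h | h
      · exact h.ge
      · exact (List.rel_of_pairwise_cons htpw.of_cons h).le
    have hpc : p.2 ∈ criticalHeights G V := (hmem _).mp
      (List.mem_append_right _ (List.mem_cons_of_mem _ (List.mem_cons_of_mem _ h₂)))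
    rw [hout _ (fun h => by linarith [h.2])]
    simp only [hvert p.2 hpc (fun h => by linarith [h.2])]
  rw [List.map_congr_left hbelow, List.map_congr_left habove]
  simp only [hswapv₁, hswapv₂] at hdown ⊢
  split_ifs at hup hdown ⊢ <;> omega
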